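/- arXiv:1602.04560 — 9 statements merged into one kernel-verified Lean document; each statement's English description precedes it below -/
import Mathlib

section
/- Let R be a finite semiring (in the general sense, with no identities assumed). Then R is not {0,1}-free if and only if there exist elements z, o ∈ R such that z ≠ o, z + z = z, z + o = o, z * o = z, o * z = z, z * z = z, and o * o = o. -/
/-!
If `z`, `o` are the additive and multiplicative identities of a closed subset `T`, the only
identity in the list that is not immediate is `z * z = z`, which follows from
`z = z * o = z * (z + o) = z * z + z = z * z`.

Conversely, given `z` and `o`, take `T` to be the set of all `t` with
`z + t = t`, `o * t = t = t * o` and `z * t = z = t * z`. It contains `z` and `o`; the one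
closure condition needing an idea is `z + a * b = z * b + a * b = (z + a) * b = a * b`.
-/

/-- A subset `T` is closed under the (general) semiring operations `add` and `mul`. -/
def SRClosed {R : Type*} (add mul : R → R → R) (T : Set R) : Prop :=
  (∀ a ∈ T, ∀ b ∈ T, add a b ∈ T) ∧ (∀ a ∈ T, ∀ b ∈ T, mul a b ∈ T)

/-- A general semiring (given by its operations) is `{0,1}`-free if no subset closed under
addition and multiplication contains an additive identity `z` and a multiplicative
identity `o` for it with `z ≠ o`. -/
def ZeroOneFree {R : Type*} (add mul : R → R → R) : Prop :=
  ¬ ∃ T : Set R, SRClosed add mul T ∧ ∃ z ∈ T, ∃ o ∈ T, z ≠ o ∧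
      (∀ t ∈ T, add z t = t) ∧ (∀ t ∈ T, mul o t = t ∧ mul t o = t)

theorem not_zeroOneFree_iff_exists_zero_one
    {R : Type*} [Fintype R] [Nonempty R]
    (add mul : R → R → R)
    (hAddComm : ∀ a b, add a b = add b a)
    (hAddAssoc : ∀ a b c, add (add a b) c = add a (add b c))
    (hMulAssoc : ∀ a b c, mul (mul a b) c = mul a (mul b c))
    (hLD : ∀ a b c, mul a (add b c) = add (mul a b) (mul a c))
    (hRD : ∀ a b c, mul (add b c) a = add (mul b a) (mul c a)) :
    ¬ ZeroOneFree add mul ↔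
      ∃ z o : R, z ≠ o ∧ add z z = z ∧ add z o = o ∧
        mul z o = z ∧ mul o z = z ∧ mul z z = z ∧ mul o o = o := by
  unfold ZeroOneFree
  rw [not_not]
  constructor
  · rintro ⟨T, ⟨-, hmul⟩, z, hz, o, ho, hne, hzero, hone⟩
    refine ⟨z, o, hne, hzero z hz, hzero o ho, (hone z hz).2, (hone z hz).1, ?_, (hone o ho).1⟩
    calc mul z z = add z (mul z z) := (hzero _ (hmul z hz z hz)).symm
      _ = add (mul z z) (mul z o) := by rw [hAddComm, (hone z hz).2]
      _ = mul z (add z o) := (hLD z z o).symm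
      _ = z := by rw [hzero o ho, (hone z hz).2]
  · rintro ⟨z, o, hne, hzz, hzo, mzo, moz, mzz, moo⟩
    refine ⟨{t | add z t = t ∧ mul o t = t ∧ mul t o = t ∧ mul z t = z ∧ mul t z = z},
      ⟨?_, ?_⟩, z, ⟨hzz, moz, mzo, mzz, mzz⟩, o, ⟨hzo, moo, moo, mzo, moz⟩, hne,
      fun t ht => ht.1, fun t ht => ⟨ht.2.1, ht.2.2.1⟩⟩
    · rintro a ⟨a1, a2, a3, a4, a5⟩ b ⟨b1, b2, b3, b4, b5⟩
      refine ⟨?_, ?_, ?_, ?_, ?_⟩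
      · rw [← hAddAssoc, a1]
      · rw [hLD, a2, b2]
      · rw [hRD, a3, b3]
      · rw [hLD, a4, b4, hzz]
      · rw [hRD, a5, b5, hzz]
    · rintro a ⟨a1, a2, a3, a4, a5⟩ b ⟨b1, b2, b3, b4, b5⟩
      refine ⟨?_, ?_, ?_, ?_, ?_⟩
      · calc add z (mul a b) = add (mul z b) (mul a b) := by rw [b4]
          _ = mul a b := by rw [← hRD, a1]
      · rw [← hMulAssoc, a2]
      · rw [hMulAssoc, b3]
      · rw [← hMulAssoc, a4, b4]
      · rw [hMulAssoc, b5, a5]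
end

section
/- Let R be a finite semiring (in the general sense, with no identities assumed). Then R is not {0,1}-free if and only if either there exists an injective map φ : Bool → R satisfying φ(x ∨ y) = φ(x) + φ(y) and φ(x ∧ y) = φ(x) * φ(y) for all x, y (i.e., R contains a copy of the Boolean semiring B₂), or there exist d ≥ 2 and an injective map φ : ZMod d → R satisfying φ(x + y) = φ(x) + φ(y) and φ(x * y) = φ(x) * φ(y) for all x, y (i.e., R contains a copy of the ring Z_d). -/
/-- The map `n ↦ z + o + ⋯ + o` with `n` summands `o`. -/
def natHom {R : Type*} (add : R → R → R) (z o : R) : ℕ → R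
  | 0 => z
  | n + 1 => add (natHom add z o n) o

section

variable {R : Type*} {add mul : R → R → R} {T : Set R} {z o : R}

theorem natHom_mem (hT : SRClosed add mul T) (hz : z ∈ T) (ho : o ∈ T) (n : ℕ) :
    natHom add z o n ∈ T := by
  induction n with
  | zero => exact hz
  | succ n ih => exact hT.1 _ ih _ ho

theorem natHom_add (hAddComm : ∀ a b, add a b = add b a)
    (hAddAssoc : ∀ a b c, add (add a b) c = add a (add b c))
    (hT : SRClosed add mul T) (hz : z ∈ T) (ho : o ∈ T) (h0 : ∀ t ∈ T, add z t = t) (a b : ℕ) :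
    natHom add z o (a + b) = add (natHom add z o a) (natHom add z o b) := by
  induction b with
  | zero =>
    change _ = add _ z
    rw [hAddComm, h0 _ (natHom_mem hT hz ho a)]
    rfl
  | succ b ih =>
    change add (natHom add z o (a + b)) o = add _ (add (natHom add z o b) o)
    rw [ih, hAddAssoc]

/-- `z` absorbs the image of `ℕ`, although it need not absorb all of `T`. -/
theorem natHom_mul_zero (hAddComm : ∀ a b, add a b = add b a)
    (hLD : ∀ a b c, mul a (add b c) = add (mul a b) (mul a c))
    (hRD : ∀ a b c, mul (add b c) a = add (mul b a) (mul c a))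
    (hT : SRClosed add mul T) (hz : z ∈ T) (ho : o ∈ T) (h0 : ∀ t ∈ T, add z t = t)
    (h1 : ∀ t ∈ T, mul o t = t ∧ mul t o = t) (a : ℕ) :
    mul (natHom add z o a) z = z := by
  induction a with
  | zero =>
    change mul z z = z
    have h := hLD z z o
    rw [h0 o ho, (h1 z hz).2, hAddComm, h0 _ (hT.2 z hz z hz)] at h
    exact h.symm
  | succ a ih =>
    change mul (add _ o) z = z
    rw [hRD, ih, (h1 z hz).1, h0 z hz]

theorem natHom_mul (hAddComm : ∀ a b, add a b = add b a)
    (hAddAssoc : ∀ a b c, add (add a b) c = add a (add b c))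
    (hLD : ∀ a b c, mul a (add b c) = add (mul a b) (mul a c))
    (hRD : ∀ a b c, mul (add b c) a = add (mul b a) (mul c a))
    (hT : SRClosed add mul T) (hz : z ∈ T) (ho : o ∈ T) (h0 : ∀ t ∈ T, add z t = t)
    (h1 : ∀ t ∈ T, mul o t = t ∧ mul t o = t) (a b : ℕ) :
    natHom add z o (a * b) = mul (natHom add z o a) (natHom add z o b) := by
  induction b with
  | zero => exact (natHom_mul_zero hAddComm hLD hRD hT hz ho h0 h1 a).symm
  | succ b ih =>
    change _ = mul _ (add (natHom add z o b) o)
    rw [Nat.mul_succ, natHom_add hAddComm hAddAssoc hT hz ho h0, ih, hLD,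
      (h1 _ (natHom_mem hT hz ho a)).2]

/-- The image of an embedded semiring with distinct identities `z'` and `o'` shows that the target
is not `{0,1}`-free. -/
theorem not_zeroOneFree_of_embedding {S : Type*} {add' mul' : S → S → S} {z' o' : S}
    (hne : z' ≠ o') (h0 : ∀ x, add' z' x = x) (h1 : ∀ x, mul' o' x = x ∧ mul' x o' = x)
    {φ : S → R} (hφ : Function.Injective φ)
    (h : ∀ x y, φ (add' x y) = add (φ x) (φ y) ∧ φ (mul' x y) = mul (φ x) (φ y)) :
    ¬ ZeroOneFree add mul := by
  refine not_not.mpr ⟨Set.range φ, ⟨?_, ?_⟩, φ z', ⟨z', rfl⟩, φ o', ⟨o', rfl⟩, hφ.ne hne, ?_, ?_⟩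
  · rintro _ ⟨x, rfl⟩ _ ⟨y, rfl⟩
    exact ⟨_, (h x y).1⟩
  · rintro _ ⟨x, rfl⟩ _ ⟨y, rfl⟩
    exact ⟨_, (h x y).2⟩
  · rintro _ ⟨x, rfl⟩
    rw [← (h _ _).1, h0]
  · rintro _ ⟨x, rfl⟩
    rw [← (h _ _).2, ← (h _ _).2, (h1 x).1, (h1 x).2]
    exact ⟨rfl, rfl⟩

variable {f : ℕ → R}

/-- If a homomorphism from `ℕ` sends some positive integer to the image of `0`, its image is a copy
of `ZMod d` for the least such integer `d`. -/
theorem exists_zmod_embedding (hadd : ∀ a b, f (a + b) = add (f a) (f b))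
    (hmul : ∀ a b, f (a * b) = mul (f a) (f b)) (hne : f 0 ≠ f 1) (hex : ∃ d, 0 < d ∧ f d = f 0) :
    ∃ d : ℕ, 2 ≤ d ∧ ∃ φ : ZMod d → R, Function.Injective φ ∧
      ∀ x y : ZMod d, φ (x + y) = add (φ x) (φ y) ∧ φ (x * y) = mul (φ x) (φ y) := by
  classical
  obtain ⟨d, ⟨hd0, hd⟩, hmin⟩ : ∃ d, (0 < d ∧ f d = f 0) ∧ ∀ m < d, ¬ (0 < m ∧ f m = f 0) :=
    ⟨Nat.find hex, Nat.find_spec hex, fun m hm => Nat.find_min hex hm⟩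
  have hd2 : 2 ≤ d := by
    by_contra hlt
    obtain rfl : d = 1 := by omega
    exact hne hd.symm
  have hper : ∀ n, f (n + d) = f n := fun n => by rw [hadd, hd, ← hadd, add_zero]
  have hmod : ∀ n, f (n % d) = f n := fun n => Function.Periodic.map_mod_nat hper n
  have hinj : ∀ a b, a < b → b < d → f a ≠ f b := fun a b hab hbd he => by
    -- adding `d - b` turns `f a = f b` into `f (a + (d - b)) = f 0` with `0 < a + (d - b) < d`
    refine hmin (a + (d - b)) (by omega) ⟨by omega, ?_⟩
    rw [hadd, he, ← hadd, Nat.add_sub_cancel' hbd.le, hd]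
  have : NeZero d := ⟨by omega⟩
  refine ⟨d, hd2, fun x => f x.val, fun x y hxy => ?_, fun x y => ⟨?_, ?_⟩⟩
  · apply ZMod.val_injective d
    rcases lt_trichotomy x.val y.val with h | h | h
    · exact absurd hxy (hinj _ _ h y.val_lt)
    · exact h
    · exact absurd hxy.symm (hinj _ _ h x.val_lt)
  · change f (x + y).val = _
    rw [ZMod.val_add, hmod, hadd]
  · change f (x * y).val = _
    rw [ZMod.val_mul, hmod, hmul]

/-- If a homomorphism from `ℕ` is not injective but sends no positive integer to the image of `0`,
its image contains a copy of the Boolean semiring. -/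
theorem exists_bool_embedding (hadd : ∀ a b, f (a + b) = add (f a) (f b))
    (hmul : ∀ a b, f (a * b) = mul (f a) (f b)) (hex : ¬ ∃ d, 0 < d ∧ f d = f 0)
    {a p : ℕ} (hp : 0 < p) (hap : f (a + p) = f a) :
    ∃ φ : Bool → R, Function.Injective φ ∧
      ∀ x y : Bool, φ (x || y) = add (φ x) (φ y) ∧ φ (x && y) = mul (φ x) (φ y) := by
  have hper : ∀ n, a ≤ n → ∀ k, f (n + p * k) = f n := by
    intro n hn k
    induction k with
    | zero => simp
    | succ k ih =>
      rw [show n + p * (k + 1) = (a + p) + (n - a + p * k) by rw [Nat.mul_succ]; omega, hadd, hap,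
        ← hadd, show a + (n - a + p * k) = n + p * k by omega, ih]
  -- a positive multiple of the period `p` beyond the preperiod `a`
  obtain ⟨m, hm⟩ : ∃ m, m = p * (a + 1) := ⟨_, rfl⟩
  have ham : a < m := by nlinarith
  have hm2 : f (m + m) = f m := by
    conv_lhs => rw [show m + m = m + p * (a + 1) by omega]
    exact hper m ham.le _
  have hmm : f (m * m) = f m := by
    obtain ⟨k, hk⟩ : ∃ k, m = k + 1 := ⟨m - 1, by omega⟩
    rw [show m * m = m + p * ((a + 1) * k) by rw [← mul_assoc, ← hm, hk]; ring]
    exact hper m ham.le _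
  have hne : f m ≠ f 0 := fun h => hex ⟨m, by omega, h⟩
  refine ⟨fun x => if x then f m else f 0, ?_, ?_⟩
  · intro x y
    cases x <;> cases y <;> simp [hne, hne.symm]
  · intro x y
    cases x <;> cases y <;> simp [← hadd, ← hmul, hm2, hmm]

end

theorem not_zeroOneFree_iff_contains_B2_or_ZMod
    {R : Type*} [Fintype R] [Nonempty R]
    (add mul : R → R → R)
    (hAddComm : ∀ a b, add a b = add b a)
    (hAddAssoc : ∀ a b c, add (add a b) c = add a (add b c))
    (hMulAssoc : ∀ a b c, mul (mul a b) c = mul a (mul b c))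
    (hLD : ∀ a b c, mul a (add b c) = add (mul a b) (mul a c))
    (hRD : ∀ a b c, mul (add b c) a = add (mul b a) (mul c a)) :
    ¬ ZeroOneFree add mul ↔
      ((∃ φ : Bool → R, Function.Injective φ ∧
          ∀ x y : Bool, φ (x || y) = add (φ x) (φ y) ∧ φ (x && y) = mul (φ x) (φ y)) ∨
        (∃ d : ℕ, 2 ≤ d ∧ ∃ φ : ZMod d → R, Function.Injective φ ∧
          ∀ x y : ZMod d, φ (x + y) = add (φ x) (φ y) ∧ φ (x * y) = mul (φ x) (φ y))) := by
  constructor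
  · intro h
    obtain ⟨T, hT, z, hz, o, ho, hne, h0, h1⟩ := not_not.mp h
    have hadd := natHom_add hAddComm hAddAssoc hT hz ho h0
    have hmul := natHom_mul hAddComm hAddAssoc hLD hRD hT hz ho h0 h1
    by_cases hex : ∃ d, 0 < d ∧ natHom add z o d = natHom add z o 0
    · refine Or.inr (exists_zmod_embedding hadd hmul ?_ hex)
      change z ≠ add z o
      rwa [h0 o ho]
    · obtain ⟨a, b, hab, he⟩ := Finite.exists_ne_map_eq_of_infinite (natHom add z o)
      rcases lt_or_gt_of_ne hab with hlt | hlt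
      · exact Or.inl (exists_bool_embedding hadd hmul hex (a := a) (p := b - a) (by omega)
          (by rw [Nat.add_sub_cancel' hlt.le, he]))
      · exact Or.inl (exists_bool_embedding hadd hmul hex (a := b) (p := a - b) (by omega)
          (by rw [Nat.add_sub_cancel' hlt.le, he]))
  · rintro (⟨φ, hφ, h⟩ | ⟨d, hd, φ, hφ, h⟩)
    · exact not_zeroOneFree_of_embedding (z' := false) (o' := true) (by simp) (by simp) (by simp)
        hφ h
    · have : Fact (1 < d) := ⟨hd⟩
      exact not_zeroOneFree_of_embedding (z' := (0 : ZMod d)) (o' := 1) zero_ne_one zero_add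
        (fun x => ⟨one_mul x, mul_one x⟩) hφ h
end

section
/- Let R be a finite semiring (in the general sense) that is {0,1}-free, let R' be a semiring, and let φ : R → R' be a surjective map satisfying φ(a + b) = φ(a) + φ(b) and φ(a * b) = φ(a) * φ(b) for all a, b ∈ R. Then R' is {0,1}-free. -/
/-- A nonempty subset of a finite semigroup that is closed under the operation contains an
idempotent: the Ellis–Numakura lemma for the discrete topology. -/
theorem exists_idem_of_closed {R : Type*} [Finite R] (op : R → R → R)
    (hassoc : ∀ a b c, op (op a b) c = op a (op b c)) (S : Set R) (hne : S.Nonempty)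
    (hS : ∀ a ∈ S, ∀ b ∈ S, op a b ∈ S) : ∃ x ∈ S, op x x = x := by
  let : Semigroup R := { mul := op, mul_assoc := hassoc }
  let : TopologicalSpace R := ⊥
  have : DiscreteTopology R := ⟨rfl⟩
  exact exists_idempotent_in_compact_subsemigroup (fun _ => continuous_of_discreteTopology) S hne
    S.toFinite.isCompact hS

/-- If `w` is idempotent for both operations, `e` is a multiplicative idempotent acting as the
identity on `w`, and `e + w ≠ w`, then the semiring is not `{0,1}`-free: `w` and `e + w` serve as
zero and one. -/
theorem not_zeroOneFree_of_idem {R : Type*} (add mul : R → R → R)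
    (hAddComm : ∀ a b, add a b = add b a)
    (hAddAssoc : ∀ a b c, add (add a b) c = add a (add b c))
    (hMulAssoc : ∀ a b c, mul (mul a b) c = mul a (mul b c))
    (hLD : ∀ a b c, mul a (add b c) = add (mul a b) (mul a c))
    (hRD : ∀ a b c, mul (add b c) a = add (mul b a) (mul c a))
    (e w : R) (he : mul e e = e) (hew : mul e w = w) (hwe : mul w e = w)
    (hadd : add w w = w) (hmul : mul w w = w) (hne : w ≠ add e w) :
    ¬ ZeroOneFree add mul := by
  intro h
  have hwu : add w (add e w) = add e w := by
    rw [hAddComm w, hAddAssoc, hadd]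
  have huw : mul (add e w) w = w := by rw [hRD, hew, hmul, hadd]
  have hwu' : mul w (add e w) = w := by rw [hLD, hwe, hmul, hadd]
  have huu : mul (add e w) (add e w) = add e w := by
    rw [hRD, hwu', hLD, he, hew, hAddAssoc, hadd]
  generalize add e w = u at *
  -- Demanding that `w` be absorbing is what makes `w + t = t` stable under products:
  -- `w + s * t = w * t + s * t = (w + s) * t = s * t`.
  refine h ⟨{t | add w t = t ∧ mul u t = t ∧ mul t u = t ∧ mul w t = w ∧ mul t w = w},
    ⟨?_, ?_⟩, w, ⟨hadd, huw, hwu', hmul, hmul⟩, u, ⟨hwu, huu, huu, hwu', huw⟩, hne,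
    fun t ht => ht.1, fun t ht => ⟨ht.2.1, ht.2.2.1⟩⟩
  · rintro s ⟨s1, s2, s3, s4, s5⟩ t ⟨t1, t2, t3, t4, t5⟩
    refine ⟨?_, ?_, ?_, ?_, ?_⟩
    · rw [← hAddAssoc, s1]
    · rw [hLD, s2, t2]
    · rw [hRD, s3, t3]
    · rw [hLD, s4, t4, hadd]
    · rw [hRD, s5, t5, hadd]
  · rintro s ⟨s1, s2, s3, s4, s5⟩ t ⟨t1, t2, t3, t4, t5⟩
    refine ⟨?_, ?_, ?_, ?_, ?_⟩
    · calc add w (mul s t) = add (mul w t) (mul s t) := by rw [t4]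
        _ = mul s t := by rw [← hRD, s1]
    · rw [← hMulAssoc, s2]
    · rw [hMulAssoc, t3]
    · rw [← hMulAssoc, s4, t4]
    · rw [hMulAssoc, t5, s5]

theorem zeroOneFree_of_surjective_hom
    {R R' : Type*} [Fintype R] [Nonempty R]
    (add mul : R → R → R) (add' mul' : R' → R' → R')
    (hAddComm : ∀ a b, add a b = add b a)
    (hAddAssoc : ∀ a b c, add (add a b) c = add a (add b c))
    (hMulAssoc : ∀ a b c, mul (mul a b) c = mul a (mul b c))
    (hLD : ∀ a b c, mul a (add b c) = add (mul a b) (mul a c))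
    (hRD : ∀ a b c, mul (add b c) a = add (mul b a) (mul c a))
    (hAddComm' : ∀ a b, add' a b = add' b a)
    (hAddAssoc' : ∀ a b c, add' (add' a b) c = add' a (add' b c))
    (hMulAssoc' : ∀ a b c, mul' (mul' a b) c = mul' a (mul' b c))
    (hLD' : ∀ a b c, mul' a (add' b c) = add' (mul' a b) (mul' a c))
    (hRD' : ∀ a b c, mul' (add' b c) a = add' (mul' b a) (mul' c a))
    (hfree : ZeroOneFree add mul)
    (φ : R → R') (hsurj : Function.Surjective φ)
    (hadd : ∀ a b, φ (add a b) = add' (φ a) (φ b))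
    (hmul : ∀ a b, φ (mul a b) = mul' (φ a) (φ b)) :
    ZeroOneFree add' mul' := by
  rintro ⟨T, ⟨-, hTm⟩, z, hz, o, ho, hzo, hzT, hoT⟩
  have hzz : mul' z z = z := by
    have h := hLD' z z o
    rw [hzT o ho, (hoT z hz).2, hAddComm', hzT _ (hTm z hz z hz)] at h
    exact h.symm
  obtain ⟨a, ha⟩ := hsurj z
  obtain ⟨b, hb⟩ := hsurj o
  obtain ⟨e, heo, he⟩ := exists_idem_of_closed mul hMulAssoc {x | φ x = o} ⟨b, hb⟩ (by
    intro x (hx : φ x = o) y (hy : φ y = o)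
    change φ _ = o
    rw [hmul, hx, hy, (hoT o ho).1])
  change φ e = o at heo
  obtain ⟨f, ⟨hfz, hef, hfe⟩, hff⟩ := exists_idem_of_closed add hAddAssoc
    {x | φ x = z ∧ mul e x = x ∧ mul x e = x}
    ⟨mul (mul e a) e, by rw [hmul, hmul, heo, ha, (hoT z hz).1, (hoT z hz).2],
      by rw [← hMulAssoc, ← hMulAssoc, he], by rw [hMulAssoc, he]⟩ (by
    rintro x ⟨x1, x2, x3⟩ y ⟨y1, y2, y3⟩
    exact ⟨by rw [hadd, x1, y1, hzT z hz], by rw [hLD, x2, y2], by rw [hRD, x3, y3]⟩)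
  obtain ⟨w, ⟨hwz, hew, hwe, hadd_w⟩, hmul_w⟩ := exists_idem_of_closed mul hMulAssoc
    {x | φ x = z ∧ mul e x = x ∧ mul x e = x ∧ add x x = x} ⟨f, hfz, hef, hfe, hff⟩ (by
    rintro x ⟨x1, x2, x3, x4⟩ y ⟨y1, y2, y3, y4⟩
    exact ⟨by rw [hmul, x1, y1, hzz], by rw [← hMulAssoc, x2], by rw [hMulAssoc, y3],
      by rw [← hLD, y4]⟩)
  refine not_zeroOneFree_of_idem add mul hAddComm hAddAssoc hMulAssoc hLD hRD e w he hew hwe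
    hadd_w hmul_w (fun h => hzo ?_) hfree
  rw [← hwz, h, hadd, heo, hwz, hAddComm', hzT o ho]
end

section
/- Let R be a {0,1}-free semiring (in the general sense) and let e, f ∈ R satisfy e * f = f, f * e = f, e * e = e, f * f = f, and f + f = f. Then e + f = f. -/
theorem add_idem_absorb_of_zeroOneFree
    {R : Type*}
    (add mul : R → R → R)
    (hAddComm : ∀ a b, add a b = add b a)
    (hAddAssoc : ∀ a b c, add (add a b) c = add a (add b c))
    (hMulAssoc : ∀ a b c, mul (mul a b) c = mul a (mul b c))
    (hLD : ∀ a b c, mul a (add b c) = add (mul a b) (mul a c))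
    (hRD : ∀ a b c, mul (add b c) a = add (mul b a) (mul c a))
    (hfree : ZeroOneFree add mul)
    (e f : R)
    (hef : mul e f = f) (hfe : mul f e = f)
    (he : mul e e = e) (hff : mul f f = f) (hfaddf : add f f = f) :
    add e f = f := by
  by_contra hne
  apply hfree
  refine ⟨{t | add f t = t ∧ mul f t = f ∧ mul t f = f ∧ mul (add e f) t = t ∧
      mul t (add e f) = t}, ⟨?_, ?_⟩, f, ?_, add e f, ?_, fun h => hne h.symm,
      fun t ht => ht.1, fun t ht => ht.2.2.2⟩
  · rintro a ⟨a1, a2, a3, a4, a5⟩ b ⟨b1, b2, b3, b4, b5⟩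
    refine ⟨?_, ?_, ?_, ?_, ?_⟩
    · rw [← hAddAssoc, a1]
    · rw [hLD, a2, b2, hfaddf]
    · rw [hRD, a3, b3, hfaddf]
    · rw [hLD, a4, b4]
    · rw [hRD, a5, b5]
  · rintro a ⟨a1, a2, a3, a4, a5⟩ b ⟨b1, b2, b3, b4, b5⟩
    refine ⟨?_, ?_, ?_, ?_, ?_⟩
    · calc add f (mul a b) = add (mul f b) (mul a b) := by rw [b2]
        _ = mul (add f a) b := (hRD _ _ _).symm
        _ = mul a b := by rw [a1]
    · rw [← hMulAssoc, a2, b2]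
    · rw [hMulAssoc, b3, a3]
    · rw [← hMulAssoc, a4]
    · rw [hMulAssoc, b5]
  · exact ⟨hfaddf, hff, hff, by rw [hRD, hef, hff, hfaddf], by rw [hLD, hfe, hff, hfaddf]⟩
  · have h1 : mul (add e f) f = f := by rw [hRD, hef, hff, hfaddf]
    have h2 : mul f (add e f) = f := by rw [hLD, hfe, hff, hfaddf]
    have h3 : mul (add e f) (add e f) = add e f := by
      rw [hLD, h1, hRD, he, hfe, hAddAssoc, hfaddf]
    exact ⟨by rw [hAddComm e f, ← hAddAssoc, hfaddf], h2, h1, h3, h3⟩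
end

section
/- Let R be a finite semiring (in the general sense) that is {0,1}-free. Then R admits a rank-function, i.e., there exists a function rank : R → ℕ such that: (i) rank(a) ≥ 1 for all a ∈ R; (ii) rank(a) ≤ rank(a + b) for all a, b ∈ R; (iii) rank(a) ≤ rank(a * b) and rank(b) ≤ rank(a * b) for all a, b ∈ R; and (iv) for all e, f ∈ R with e * e = e and f * f = f, and all a, b ∈ R with e * a * f = a and e * b * f = b, if rank(a) = rank(a + b) then a = a + b. -/
namespace RankFunction

section

variable {R : Type*} [AddCommSemigroup R]

/-- `x` is a summand of `y`, or equal to it: the algebraic order of an additive semigroup that may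
lack a zero. -/
def Summand (x y : R) : Prop := x = y ∨ ∃ c, x + c = y

theorem Summand.trans {x y z : R} (h : Summand x y) (h' : Summand y z) : Summand x z := by
  rcases h with rfl | ⟨c, rfl⟩
  · exact h'
  · rcases h' with rfl | ⟨d, rfl⟩
    · exact Or.inr ⟨c, rfl⟩
    · exact Or.inr ⟨c + d, (add_assoc _ _ _).symm⟩

theorem summand_add_right (x y : R) : Summand x (x + y) := Or.inr ⟨y, rfl⟩

theorem Summand.add_right {x y : R} (h : Summand x y) (z : R) : Summand (x + z) (y + z) := by
  rcases h with rfl | ⟨c, rfl⟩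
  · exact Or.inl rfl
  · exact Or.inr ⟨c, add_right_comm _ _ _⟩

theorem Summand.absorb {x y b : R} (h : Summand x y) (hx : x + b = x) : y + b = y := by
  rcases h with rfl | ⟨c, rfl⟩
  · exact hx
  · rw [add_right_comm, hx]

/-- A nonempty subset of a finite semigroup that is closed under the operation contains an
idempotent. -/
theorem exists_idempotent {M : Type*} [Semigroup M] [Finite M] (s : Set M) (hs : s.Nonempty)
    (hmul : ∀ x ∈ s, ∀ y ∈ s, x * y ∈ s) : ∃ m ∈ s, m * m = m := by
  let : TopologicalSpace M := ⊥
  have : DiscreteTopology M := ⟨rfl⟩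
  exact exists_idempotent_in_compact_subsemigroup (fun _ => continuous_of_discreteTopology) s hs
    s.toFinite.isCompact hmul

theorem exists_add_idempotent {M : Type*} [AddSemigroup M] [Finite M] (s : Set M)
    (hs : s.Nonempty) (hadd : ∀ x ∈ s, ∀ y ∈ s, x + y ∈ s) : ∃ m ∈ s, m + m = m := by
  let : TopologicalSpace M := ⊥
  have : DiscreteTopology M := ⟨rfl⟩
  exact exists_idempotent_in_compact_add_subsemigroup (fun _ => continuous_of_discreteTopology) s
    hs s.toFinite.isCompact hadd

variable [Semigroup R]

/-- `Below x y` means that `y` is obtained from `x` by iterated additions and left and right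
multiplications by elements of `R`. -/
inductive Below (x : R) : R → Prop
  | refl : Below x x
  | add {y : R} (c : R) : Below x y → Below x (y + c)
  | mul_left {y : R} (c : R) : Below x y → Below x (c * y)
  | mul_right {y : R} (c : R) : Below x y → Below x (y * c)

theorem Below.trans {x y z : R} (h : Below x y) (h' : Below y z) : Below x z := by
  induction h' with
  | refl => exact h
  | add c _ ih => exact ih.add c
  | mul_left c _ ih => exact ih.mul_left c
  | mul_right c _ ih => exact ih.mul_right c

theorem Summand.mul_left [LeftDistribClass R] {x y : R} (h : Summand x y) (p : R) :
    Summand (p * x) (p * y) := by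
  rcases h with rfl | ⟨c, rfl⟩
  · exact Or.inl rfl
  · exact Or.inr ⟨p * c, (mul_add _ _ _).symm⟩

theorem Summand.mul_right [RightDistribClass R] {x y : R} (h : Summand x y) (p : R) :
    Summand (x * p) (y * p) := by
  rcases h with rfl | ⟨c, rfl⟩
  · exact Or.inl rfl
  · exact Or.inr ⟨c * p, (add_mul _ _ _).symm⟩

variable [LeftDistribClass R] [RightDistribClass R]

/-- Sandwiching the upper element between `p` and `q` removes the case distinction on whether the
multipliers and the summand in `y = l * x * r + c` are present. -/
theorem Below.exists_summand {x y : R} (h : Below x y) :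
    ∀ p q : R, ∃ p' q', Summand (p' * x * q') (p * y * q) := by
  induction h with
  | refl => exact fun p q => ⟨p, q, Or.inl rfl⟩
  | add c _ ih =>
    intro p q
    obtain ⟨p', q', h⟩ := ih p q
    exact ⟨p', q', h.trans (((summand_add_right _ c).mul_left p).mul_right q)⟩
  | mul_left c _ ih =>
    intro p q
    obtain ⟨p', q', h⟩ := ih (p * c) q
    exact ⟨p', q', by simpa only [mul_assoc] using h⟩
  | mul_right c _ ih =>
    intro p q
    obtain ⟨p', q', h⟩ := ih p (c * q)
    exact ⟨p', q', by simpa only [mul_assoc] using h⟩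

/-- The elements `t` with `z + t = t` for which `o + z` is a two-sided unit form a subsemiring with
additive identity `z` and multiplicative identity `o + z`, so being `{0,1}`-free identifies the
two. -/
theorem one_add_zero_eq (hfree : ZeroOneFree (fun x y : R => x + y) (fun x y : R => x * y))
    {o z : R} (ho : o * o = o) (hz : z * z = z) (hzz : z + z = z) (hoz : o * z = z)
    (hzo : z * o = z) : o + z = z := by
  by_contra hne
  refine hfree ⟨{t | z + t = t ∧ (o + z) * t = t ∧ t * (o + z) = t}, ⟨?_, ?_⟩,
    z, ?_, o + z, ?_, fun h => hne h.symm, fun t ht => ht.1, fun t ht => ht.2⟩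
  · rintro s ⟨hs, hs1, hs2⟩ t ⟨ht, ht1, ht2⟩
    exact ⟨by rw [← add_assoc, hs], by rw [mul_add, hs1, ht1], by rw [add_mul, hs2, ht2]⟩
  · rintro s ⟨hs, hs1, hs2⟩ t ⟨ht, ht1, ht2⟩
    refine ⟨?_, by rw [← mul_assoc, hs1], by rw [mul_assoc, ht2]⟩
    have h1 : z + z * t = z * t := by
      conv_rhs => rw [← ht, mul_add, hz]
    have h2 : z * t + s * t = s * t := by rw [← add_mul, hs]
    change z + s * t = s * t
    rw [← h2, ← add_assoc, h1]
  · exact ⟨hzz, by rw [add_mul, hoz, hz, hzz], by rw [mul_add, hzo, hz, hzz]⟩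
  · have h : z + (o + z) = o + z := by rw [add_left_comm, hzz]
    have h' : (o + z) * (o + z) = o + z := by
      rw [add_mul, mul_add, mul_add, ho, hoz, hzo, hz, hzz, add_assoc, hzz]
    exact ⟨h, h', h'⟩

/-- Some multiple of a multiplicative idempotent `l ∈ o R o` absorbs `o`. -/
theorem exists_multiple_absorbing [Finite R]
    (hfree : ZeroOneFree (fun x y : R => x + y) (fun x y : R => x * y))
    {o l : R} (ho : o * o = o) (hl : l * l = l) (hol : o * l = l) (hlo : l * o = l) :
    ∃ L ∈ AddSubsemigroup.closure {l}, o + L = L := by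
  obtain ⟨L, hL, hLL⟩ := exists_add_idempotent (AddSubsemigroup.closure {l} : Set R)
    ⟨l, AddSubsemigroup.subset_closure rfl⟩ (fun x hx y hy => AddSubsemigroup.add_mem _ hx hy)
  have key : ∀ x ∈ AddSubsemigroup.closure {l}, l * x = x ∧ o * x = x ∧ x * o = x := by
    intro x hx
    induction hx using AddSubsemigroup.closure_induction with
    | mem x hx => obtain rfl : x = l := hx; exact ⟨hl, hol, hlo⟩
    | add x y _ _ hx hy =>
      exact ⟨by rw [mul_add, hx.1, hy.1], by rw [mul_add, hx.2.1, hy.2.1],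
        by rw [add_mul, hx.2.2, hy.2.2]⟩
  -- `l * L = L`, so a multiple of `l` acts on `L` as a sum of copies of `L`, which is `L`.
  have hmulL : ∀ x ∈ AddSubsemigroup.closure {l}, x * L = L := by
    intro x hx
    induction hx using AddSubsemigroup.closure_induction with
    | mem x hx => obtain rfl : x = l := hx; exact (key L hL).1
    | add x y _ _ hx hy => rw [add_mul, hx, hy, hLL]
  exact ⟨L, hL, one_add_zero_eq hfree ho (hmulL L hL) hLL (key L hL).2.1 (key L hL).2.2⟩

/-- The only property of the rank that uses `{0,1}`-freeness: inside `e R f`, adding `b` to `a`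
either changes nothing or moves strictly up in the order `Below`. -/
theorem eq_add_of_below [Finite R]
    (hfree : ZeroOneFree (fun x y : R => x + y) (fun x y : R => x * y))
    {e f a b : R} (he : e * e = e) (hf : f * f = f) (ha : e * a * f = a) (hb : e * b * f = b)
    (h : Below (a + b) a) : a = a + b := by
  have hea : e * a = a := by rw [← ha, ← mul_assoc, ← mul_assoc, he]
  have haf : a * f = a := by rw [← ha, mul_assoc, hf]
  have heb : e * b = b := by rw [← hb, ← mul_assoc, ← mul_assoc, he]
  have hbf : b * f = b := by rw [← hb, mul_assoc, hf]
  have : Finite Rᵐᵒᵖ := Finite.of_equiv R MulOpposite.opEquiv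
  -- The right multipliers compose in the opposite order, hence the opposite semigroup.
  obtain ⟨⟨l, r'⟩, ⟨⟨hel, hle, hfr, hrf, hlr⟩, hidem⟩⟩ := exists_idempotent (M := R × Rᵐᵒᵖ)
    {x | e * x.1 = x.1 ∧ x.1 * e = x.1 ∧ f * x.2.unop = x.2.unop ∧ x.2.unop * f = x.2.unop ∧
      Summand (x.1 * (a + b) * x.2.unop) a}
    (by
      obtain ⟨p, q, hpq⟩ := h.exists_summand e f
      refine ⟨(e * p * e, MulOpposite.op (f * q * f)), ?_, ?_, ?_, ?_, ?_⟩
      · simp only [← mul_assoc, he]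
      · simp only [mul_assoc, he]
      · simp only [MulOpposite.unop_op, ← mul_assoc, hf]
      · simp only [MulOpposite.unop_op, mul_assoc, hf]
      · have h1 : e * (a + b) = a + b := by rw [mul_add, hea, heb]
        have h2 : (a + b) * f = a + b := by rw [add_mul, haf, hbf]
        have h3 := (hpq.mul_left e).mul_right f
        rw [ha, ha] at h3
        have h4 : e * p * e * (a + b) * (f * q * f) = e * (p * (a + b) * q) * f := by
          rw [mul_assoc (e * p), h1, mul_assoc f q f, ← mul_assoc _ f (q * f),
            mul_assoc (e * p) (a + b) f, h2]
          simp only [mul_assoc]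
        change Summand (e * p * e * (a + b) * (f * q * f)) a
        rwa [h4])
    (by
      rintro ⟨l, r⟩ ⟨h1, h2, h3, h4, h5⟩ ⟨l', r'⟩ ⟨h1', h2', h3', h4', h5'⟩
      dsimp only at h1 h2 h3 h4 h5 h1' h2' h3' h4' h5'
      refine ⟨?_, ?_, ?_, ?_, ?_⟩
      · change e * (l * l') = l * l'
        rw [← mul_assoc, h1]
      · change l * l' * e = l * l'
        rw [mul_assoc, h2']
      · change f * (r'.unop * r.unop) = r'.unop * r.unop
        rw [← mul_assoc, h3']
      · change r'.unop * r.unop * f = r'.unop * r.unop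
        rw [mul_assoc, h4]
      · change Summand (l * l' * (a + b) * (r'.unop * r.unop)) a
        have h6 := (((summand_add_right a b).mul_left l).mul_right r.unop).trans h5
        have h7 := ((h5'.mul_left l).mul_right r.unop).trans h6
        simpa only [mul_assoc] using h7)
  obtain ⟨r, rfl⟩ : ∃ r, MulOpposite.op r = r' := ⟨r'.unop, rfl⟩
  dsimp only [MulOpposite.unop_op] at hel hle hfr hrf hlr
  have hll : l * l = l := congrArg Prod.fst hidem
  have hrr : r * r = r := congrArg (fun x => x.2.unop) hidem
  set u := l * a * r with hu
  have hlr' : Summand (u + l * b * r) a := by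
    rwa [mul_add, add_mul] at hlr
  have hua : Summand u a := (summand_add_right _ _).trans hlr'
  have hstep : Summand (u + l * b * r) u := by
    have h1 := (hlr.mul_left l).mul_right r
    have h2 : l * (l * (a + b) * r) * r = u + l * b * r := by
      rw [mul_assoc l (a + b) r, ← mul_assoc l l, hll, mul_assoc l _ r, mul_assoc (a + b) r r, hrr,
        ← mul_assoc, mul_add, add_mul]
    rwa [h2] at h1
  have hcomb : ∀ {x y : R}, Summand (u + x) u → Summand (u + y) u → Summand (u + (x + y)) u := by
    intro x y hx hy
    rw [← add_assoc]
    exact (hx.add_right y).trans hy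
  have hx : ∀ x ∈ AddSubsemigroup.closure {l}, Summand (u + x * b * r) u := by
    intro x hx
    induction hx using AddSubsemigroup.closure_induction with
    | mem x hx => obtain rfl : x = l := hx; exact hstep
    | add x y _ _ hx hy => rw [add_mul, add_mul]; exact hcomb hx hy
  have hxy : ∀ x ∈ AddSubsemigroup.closure {l}, ∀ y ∈ AddSubsemigroup.closure {r},
      Summand (u + x * b * y) u := by
    intro x hxl y hy
    induction hy using AddSubsemigroup.closure_induction with
    | mem y hy => obtain rfl : y = r := hy; exact hx x hxl
    | add y z _ _ hy hz => rw [mul_add]; exact hcomb hy hz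
  obtain ⟨L, hL, heL⟩ := exists_multiple_absorbing hfree he hll hel hle
  obtain ⟨G, hG, hfG⟩ := exists_multiple_absorbing hfree hf hrr hfr hrf
  -- `L * b * G = b * G + L * b * G` and `b * G = b + b * G`.
  have habs : L * b * G + b = L * b * G := by
    have h1 : b + b * G = b * G := by
      calc b + b * G = b * f + b * G := by rw [hbf]
        _ = b * G := by rw [← mul_add, hfG]
    have h2 : b * G + L * b * G = L * b * G := by
      calc b * G + L * b * G = e * b * G + L * b * G := by rw [heb]
        _ = L * b * G := by rw [← add_mul, ← add_mul, heL]
    calc L * b * G + b = b + (b * G + L * b * G) := by rw [h2, add_comm]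
      _ = L * b * G := by rw [← add_assoc, h1, h2]
  exact (((hxy L hL G hG).trans hua).absorb (by rw [add_assoc, habs])).symm

theorem exists_rank [Fintype R]
    (hfree : ZeroOneFree (fun x y : R => x + y) (fun x y : R => x * y)) :
    ∃ rank : R → ℕ,
      (∀ a : R, 1 ≤ rank a) ∧
      (∀ a b : R, rank a ≤ rank (a + b)) ∧
      (∀ a b : R, rank a ≤ rank (a * b) ∧ rank b ≤ rank (a * b)) ∧
      (∀ e f a b : R, e * e = e → f * f = f → e * a * f = a → e * b * f = b →
        rank a = rank (a + b) → a = a + b) := by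
  have hmono : ∀ {x y : R}, Below x y → {t | Below t x} ⊆ {t | Below t y} :=
    fun h _ ht => Below.trans ht h
  have hle : ∀ {x y : R}, Below x y → {t | Below t x}.ncard ≤ {t | Below t y}.ncard :=
    fun h => Set.ncard_le_ncard (hmono h) (Set.toFinite _)
  refine ⟨fun a => {t | Below t a}.ncard, fun a => ?_, fun a b => hle (Below.refl.add b),
    fun a b => ⟨hle (Below.refl.mul_right b), hle (Below.refl.mul_left a)⟩, ?_⟩
  · exact (Set.ncard_pos (Set.toFinite _)).2 ⟨a, Below.refl⟩
  · intro e f a b he hf ha hb hab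
    refine eq_add_of_below hfree he hf ha hb ?_
    have heq : {t | Below t a} = {t | Below t (a + b)} :=
      Set.eq_of_subset_of_ncard_le (hmono (Below.refl.add b)) hab.ge (Set.toFinite _)
    have hmem : a + b ∈ {t | Below t (a + b)} := Below.refl
    rwa [← heq] at hmem

end

end RankFunction

theorem exists_rank_function_of_zeroOneFree
    {R : Type*} [Fintype R] [Nonempty R]
    (add mul : R → R → R)
    (hAddComm : ∀ a b, add a b = add b a)
    (hAddAssoc : ∀ a b c, add (add a b) c = add a (add b c))
    (hMulAssoc : ∀ a b c, mul (mul a b) c = mul a (mul b c))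
    (hLD : ∀ a b c, mul a (add b c) = add (mul a b) (mul a c))
    (hRD : ∀ a b c, mul (add b c) a = add (mul b a) (mul c a))
    (hfree : ZeroOneFree add mul) :
    ∃ rank : R → ℕ,
      (∀ a : R, 1 ≤ rank a) ∧
      (∀ a b : R, rank a ≤ rank (add a b)) ∧
      (∀ a b : R, rank a ≤ rank (mul a b) ∧ rank b ≤ rank (mul a b)) ∧
      (∀ e f a b : R, mul e e = e → mul f f = f →
        mul (mul e a) f = a → mul (mul e b) f = b →
        rank a = rank (add a b) → a = add a b) := by
  let : AddCommSemigroup R := { add := add, add_assoc := hAddAssoc, add_comm := hAddComm }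
  let : Semigroup R := { mul := mul, mul_assoc := hMulAssoc }
  have : LeftDistribClass R := ⟨hLD⟩
  have : RightDistribClass R := ⟨fun a b c => hRD c a b⟩
  exact RankFunction.exists_rank hfree
end

section
/- Let S be a finite semigroup. Then the following are equivalent: (1) S is a local group, i.e., for every idempotent e ∈ S (e * e = e) and every x of the form x = e * s * e with s ∈ S, there exists y of the form y = e * t * e with t ∈ S such that x * y = e and y * x = e; (2) there do not exist nonempty subsets A, B ⊆ S with A ≠ B, A ∪ B = B, A * B = A, B * A = A, A * A = A, and B * B = B, where * denotes the setwise product. (In other words, S is a local group if and only if the power semiring P(S) is {0,1}-free.) -/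
/-!
If some local monoid `eSe` is not a group, it contains an idempotent `f ≠ e` (a finite monoid whose
only idempotent is its identity is a group), and `A = {f}`, `B = {e, f}` form a copy of `{0, 1}`.

Conversely, let `S` be a local group and let `A ⊆ B` satisfy the equations of `{0, 1}`. Then `A` is
an ideal of the subsemigroup `B`. For an idempotent `e ∈ B`, the subsemigroup `eAe ⊆ A` of the group
`eSe` contains an idempotent, which has to be `e`; so `A` contains every idempotent of `B`. As
`B * B = B` with `B` finite, every element of `B` has the form `u * e * v` with `u, e, v ∈ B` and
`e` idempotent (`exists_eq_mul_idempotent_mul`), hence lies in `A`, and `A = B`.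
-/

open Pointwise

theorem exists_idempotent_mem_of_finite {S : Type*} [Semigroup S] [Finite S] (T : Set S)
    (hne : T.Nonempty) (hT : ∀ x ∈ T, ∀ y ∈ T, x * y ∈ T) : ∃ e ∈ T, e * e = e := by
  let _ : TopologicalSpace S := ⊥
  have : DiscreteTopology S := ⟨rfl⟩
  exact exists_idempotent_in_compact_subsemigroup (fun _ => continuous_of_discreteTopology) T hne
    T.toFinite.isCompact hT

/-- Factoring `b = b₁ * ⋯ * bₙ * cₙ` inside `B` for ever longer `n`, two of the prefixes
`b₁ * ⋯ * bₙ` coincide; the right stabilizer in `B` of such a prefix is then a nonempty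
subsemigroup, and so contains an idempotent. -/
theorem exists_eq_mul_idempotent_mul {S : Type*} [Semigroup S] [Finite S] {B : Set S}
    (hB : B * B = B) {b : S} (hb : b ∈ B) :
    ∃ u ∈ B, ∃ e ∈ B, ∃ v ∈ B, e * e = e ∧ b = u * e * v := by
  have hmul : ∀ {x y}, x ∈ B → y ∈ B → x * y ∈ B := fun hx hy => hB ▸ Set.mul_mem_mul hx hy
  have hfac : ∀ x : S, ∃ l r : S, x ∈ B → l ∈ B ∧ r ∈ B ∧ l * r = x := by
    intro x
    by_cases hx : x ∈ B
    · have hx' := hx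
      rw [← hB] at hx'
      obtain ⟨l, hl, r, hr, h⟩ := Set.mem_mul.1 hx'
      exact ⟨l, r, fun _ => ⟨hl, hr, h⟩⟩
    · exact ⟨x, x, fun h => absurd h hx⟩
  choose l r hlr using hfac
  -- `P n` is the pair of the `n`-th prefix and the remaining right factor of `b`.
  let P : ℕ → S × S := fun n => Nat.rec (l b, r b) (fun _ q => (q.1 * l q.2, r q.2)) n
  have hP : ∀ n, (P n).1 ∈ B ∧ (P n).2 ∈ B ∧ (P n).1 * (P n).2 = b := by
    intro n
    induction n with
    | zero => exact hlr b hb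
    | succ n ih =>
      obtain ⟨h1, h2, h3⟩ := ih
      obtain ⟨k1, k2, k3⟩ := hlr _ h2
      refine ⟨hmul h1 k1, k2, ?_⟩
      change (P n).1 * l (P n).2 * r (P n).2 = b
      rw [mul_assoc, k3, h3]
  have hpre : ∀ i k, ∃ w ∈ B, (P (i + k + 1)).1 = (P i).1 * w := by
    intro i k
    induction k with
    | zero => exact ⟨l (P i).2, (hlr _ (hP i).2.1).1, rfl⟩
    | succ k ih =>
      obtain ⟨w, hw, h⟩ := ih
      refine ⟨w * l (P (i + k + 1)).2, hmul hw (hlr _ (hP (i + k + 1)).2.1).1, ?_⟩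
      change (P (i + k + 1)).1 * l (P (i + k + 1)).2 = _
      rw [h, mul_assoc]
  obtain ⟨i, j, hij, heq⟩ : ∃ i j, i < j ∧ (P i).1 = (P j).1 := by
    obtain ⟨i, j, hne, h⟩ := Finite.exists_ne_map_eq_of_infinite (fun n => (P n).1)
    rcases lt_or_gt_of_ne hne with hlt | hlt
    · exact ⟨i, j, hlt, h⟩
    · exact ⟨j, i, hlt, h.symm⟩
  obtain ⟨k, rfl⟩ := Nat.exists_eq_add_of_lt hij
  obtain ⟨w, hw, hwe⟩ := hpre i k
  obtain ⟨e, ⟨heB, hpe⟩, hee⟩ := exists_idempotent_mem_of_finite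
    {w | w ∈ B ∧ (P i).1 * w = (P i).1} ⟨w, hw, (heq.trans hwe).symm⟩ (by
      rintro x ⟨hx, hx'⟩ y ⟨hy, hy'⟩
      exact ⟨hmul hx hy, by rw [← mul_assoc, hx', hy']⟩)
  exact ⟨(P i).1, (hP i).1, e, heB, (P i).2, (hP i).2.1, hee, by rw [hpe, (hP i).2.2]⟩

theorem localGroup_iff_powerSemiring_zeroOneFree
    {S : Type*} [Semigroup S] [Fintype S] [Nonempty S] :
    (∀ e : S, e * e = e → ∀ s : S, ∃ t : S,
        (e * s * e) * (e * t * e) = e ∧ (e * t * e) * (e * s * e) = e) ↔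
      ¬ ∃ A B : Set S, A.Nonempty ∧ B.Nonempty ∧ A ≠ B ∧ A ∪ B = B ∧
          A * B = A ∧ B * A = A ∧ A * A = A ∧ B * B = B := by
  constructor
  · rintro hG ⟨A, B, ⟨a, ha⟩, -, hne, hAB, hmulAB, hmulBA, -, hBB⟩
    have hsub : A ⊆ B := Set.union_eq_right.1 hAB
    have hr : ∀ {x y}, x ∈ A → y ∈ B → x * y ∈ A := fun hx hy => hmulAB ▸ Set.mul_mem_mul hx hy
    have hl : ∀ {x y}, x ∈ B → y ∈ A → x * y ∈ A := fun hx hy => hmulBA ▸ Set.mul_mem_mul hx hy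
    refine hne (hsub.antisymm fun b hb => ?_)
    obtain ⟨u, hu, e, he, v, hv, hee, rfl⟩ := exists_eq_mul_idempotent_mul hBB hb
    obtain ⟨f, ⟨hfA, hef, hfe⟩, hff⟩ := exists_idempotent_mem_of_finite
      {x | x ∈ A ∧ e * x = x ∧ x * e = x}
      ⟨e * a * e, hr (hl he ha) he, by simp only [← mul_assoc, hee],
        by simp only [mul_assoc, hee]⟩ (by
        rintro x ⟨hx, hx1, -⟩ y ⟨hy, -, hy2⟩
        exact ⟨hr hx (hsub hy), by rw [← mul_assoc, hx1], by rw [mul_assoc, hy2]⟩)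
    obtain ⟨t, ht, -⟩ := hG e hee f
    rw [hef, hfe] at ht
    -- An idempotent of the group `eSe` is its identity.
    have hfe' : f = e := by
      calc f = f * e := hfe.symm
        _ = f * (f * (e * t * e)) := by rw [ht]
        _ = e := by rw [← mul_assoc, hff, ht]
    subst hfe'
    exact hr (hl hu hfA) hv
  · intro hfree e hee s
    have huniq : ∀ f, f * f = f → e * f = f → f * e = f → f = e := by
      intro f hff hef hfe
      by_contra hne
      refine hfree ⟨{f}, {e, f}, ⟨f, rfl⟩, ⟨e, Or.inl rfl⟩, ?_, ?_, ?_, ?_, ?_, ?_⟩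
      · intro h
        have : e ∈ ({f} : Set S) := h ▸ Or.inl rfl
        exact hne this.symm
      · exact Set.union_eq_right.2 (by simp)
      · simp [Set.singleton_mul, Set.image_pair, hff, hfe]
      · simp [Set.mul_singleton, Set.image_pair, hff, hef]
      · simp [hff]
      · ext x
        simp [Set.mem_mul, hee, hef, hfe, hff]
        tauto
    have h1 : ∀ x : S, e * (e * x) = e * x := fun x => by rw [← mul_assoc, hee]
    -- The right ideal `x(eSe)` and the left ideal `(eSe)x`, where `x = ese`, are subsemigroups of
    -- `eSe`, so each contains `e`; this yields a right and a left inverse of `x`.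
    obtain ⟨f, ⟨t, rfl⟩, hff⟩ := exists_idempotent_mem_of_finite
      (Set.range fun t => (e * s * e) * (e * t * e)) (Set.range_nonempty _) (by
        rintro _ ⟨t, rfl⟩ _ ⟨t', rfl⟩
        exact ⟨t * e * s * e * t', by simp only [mul_assoc, h1]⟩)
    obtain ⟨g, ⟨t', rfl⟩, hgg⟩ := exists_idempotent_mem_of_finite
      (Set.range fun t => (e * t * e) * (e * s * e)) (Set.range_nonempty _) (by
        rintro _ ⟨t, rfl⟩ _ ⟨t', rfl⟩
        exact ⟨t * e * s * e * t', by simp only [mul_assoc, h1]⟩)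
    have hR := huniq _ hff (by simp only [mul_assoc, h1]) (by simp only [mul_assoc, hee])
    have hL := huniq _ hgg (by simp only [mul_assoc, h1]) (by simp only [mul_assoc, hee])
    dsimp only at hR hL
    have heq : e * t' * e = e * t * e := by
      calc e * t' * e = (e * t' * e) * e := by rw [mul_assoc _ e e, hee]
        _ = (e * t' * e) * ((e * s * e) * (e * t * e)) := by rw [hR]
        _ = e * (e * t * e) := by rw [← mul_assoc, hL]
        _ = e * t * e := by simp only [mul_assoc, h1]
    exact ⟨t, hR, heq ▸ hL⟩
end

section
/- Let M be a monoid and F ⊆ M. The relation ∼_F is a congruence on the power semiring of M: for all nonempty subsets A₁, A₂, B₁, B₂ ⊆ M, if A₁ ∼_F A₂ and B₁ ∼_F B₂, then (A₁ ∪ B₁) ∼_F (A₂ ∪ B₂) and (A₁ * B₁) ∼_F (A₂ * B₂), where * denotes the setwise product. -/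
open Pointwise

/-- The relation `∼_F` on subsets of a monoid `M`:
`A ∼_F B` iff for all `ℓ, r ∈ M`, `ℓ A r` meets `F` exactly when `ℓ B r` does. -/
def SimF {M : Type*} [Monoid M] (F : Set M) (A B : Set M) : Prop :=
  ∀ ℓ r : M, (∃ a ∈ A, ℓ * a * r ∈ F) ↔ (∃ b ∈ B, ℓ * b * r ∈ F)

theorem simF_congruence
    {M : Type*} [Monoid M] (F : Set M)
    (A₁ A₂ B₁ B₂ : Set M)
    (hA₁ : A₁.Nonempty) (hA₂ : A₂.Nonempty) (hB₁ : B₁.Nonempty) (hB₂ : B₂.Nonempty)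
    (hA : SimF F A₁ A₂) (hB : SimF F B₁ B₂) :
    SimF F (A₁ ∪ B₁) (A₂ ∪ B₂) ∧ SimF F (A₁ * B₁) (A₂ * B₂) := by
  -- The contexts of a factor `a` in `ℓ * (a * b) * r` are `(ℓ, b * r)`, and those of `b` are
  -- `(ℓ * a, r)`; so one factor can be exchanged while the other is absorbed in the context.
  have key : ∀ X X' Y Y' : Set M, SimF F X X' → SimF F Y Y' → ∀ ℓ r : M,
      (∃ c ∈ X * Y, ℓ * c * r ∈ F) → ∃ c ∈ X' * Y', ℓ * c * r ∈ F := by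
    rintro X X' Y Y' hX hY ℓ r ⟨_, ⟨x, hx, y, hy, rfl⟩, h⟩
    obtain ⟨x', hx', h'⟩ := (hX ℓ (y * r)).1 ⟨x, hx, by simpa only [mul_assoc] using h⟩
    obtain ⟨y', hy', h''⟩ := (hY (ℓ * x') r).1 ⟨y, hy, by simpa only [mul_assoc] using h'⟩
    exact ⟨x' * y', Set.mul_mem_mul hx' hy', by simpa only [mul_assoc] using h''⟩
  refine ⟨fun ℓ r => ?_, fun ℓ r => ⟨key _ _ _ _ hA hB ℓ r, key _ _ _ _ ?_ ?_ ℓ r⟩⟩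
  · simp only [Set.mem_union, or_and_right, exists_or, hA ℓ r, hB ℓ r]
  · exact fun ℓ r => (hA ℓ r).symm
  · exact fun ℓ r => (hB ℓ r).symm
end

section
/- Let M be a monoid and F ⊆ M. For all nonempty subsets A₁, A₂ ⊆ M with A₁ ∼_F A₂ one has A₁ ∼_F (A₁ ∪ A₂); consequently, if M is finite, then every ∼_F-equivalence class of nonempty subsets contains a largest element with respect to inclusion: for every nonempty A ⊆ M there exists a nonempty C ⊆ M with A ∼_F C such that every nonempty B ⊆ M with A ∼_F B satisfies B ⊆ C. -/
/-!
A union of sets meets `F` in a given context `ℓ _ r` exactly when one of its members does. Hence a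
union of sets that are all `∼_F`-equivalent to `A`, with `A` among them, is again equivalent to `A`.
Both parts are instances: the union of two sets, and the union of the whole class of `A`, which is
then the largest element of that class.
-/

open Pointwise

theorem simF_union_self_and_largest_element
    {M : Type*} [Monoid M] (F : Set M) :
    (∀ A₁ A₂ : Set M, A₁.Nonempty → A₂.Nonempty → SimF F A₁ A₂ →
        SimF F A₁ (A₁ ∪ A₂)) ∧
    (Finite M → ∀ A : Set M, A.Nonempty →
        ∃ C : Set M, C.Nonempty ∧ SimF F A C ∧
          ∀ B : Set M, B.Nonempty → SimF F A B → B ⊆ C) := by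
  refine ⟨fun A₁ A₂ _ _ h ℓ r => ?_, fun _ A hA => ?_⟩
  · constructor
    · rintro ⟨a, ha, hF⟩
      exact ⟨a, Or.inl ha, hF⟩
    · rintro ⟨b, hb | hb, hF⟩
      · exact ⟨b, hb, hF⟩
      · exact (h ℓ r).2 ⟨b, hb, hF⟩
  -- The largest element is the union of the whole class of `A`.
  · have hAA : SimF F A A := fun _ _ => Iff.rfl
    refine ⟨⋃₀ {B | SimF F A B}, hA.mono (Set.subset_sUnion_of_mem hAA), fun ℓ r => ?_,
      fun B _ hB => Set.subset_sUnion_of_mem hB⟩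
    constructor
    · rintro ⟨a, ha, hF⟩
      exact ⟨a, ⟨A, hAA, ha⟩, hF⟩
    · rintro ⟨b, ⟨B, hB, hb⟩, hF⟩
      exact (hB ℓ r).2 ⟨b, hb, hF⟩
end

section
/- Let M be a finite monoid and F ⊆ M. Then the following are equivalent: (1) for all s, t ∈ M and every idempotent e ∈ M (e * e = e), s * t ∈ F implies s * e * t ∈ F; (2) there do not exist nonempty subsets A, B ⊆ M such that ¬(A ∼_F B), (A ∪ B) ∼_F B, (A * B) ∼_F A, (B * A) ∼_F A, (A * A) ∼_F A, and (B * B) ∼_F B, where * denotes the setwise product. (Condition (2) expresses, via the equational characterization of {0,1}-freeness, that the quotient semiring P(M)/∼_F is {0,1}-free.) -/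
/-!
If idempotents may be inserted and `ℓ * b * r ∈ F` with `b ∈ B`, choose `a ∈ A` and an idempotent
power `a ^ n` with `0 < n`, which exists because `M` is finite. Then `ℓ * b * a ^ n * r ∈ F`, and
`b * a ^ n ∈ B * A ^ n`, a set equivalent to `A` by `B * A ∼ A` and `A * A ∼ A`; hence `ℓ A r` meets
`F`. Together with `A ∪ B ∼ B` this gives `A ∼ B`.

Conversely, if insertion of an idempotent `e` fails, then `A = {e}` and `B = {1, e}` satisfy all
the required relations as equalities of sets, and are separated by the context at which the
insertion fails.
-/

open Pointwise

/-- In a finite monoid every element has an idempotent positive power. -/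
theorem exists_idempotent_pow {M : Type*} [Monoid M] [Finite M] (a : M) :
    ∃ n : ℕ, a ^ (n + 1) * a ^ (n + 1) = a ^ (n + 1) := by
  obtain ⟨i, j, hij, h⟩ := Finite.exists_ne_map_eq_of_infinite (fun n : ℕ => a ^ n)
  wlog hlt : i < j generalizing i j
  · exact this j i hij.symm h.symm (by omega)
  obtain ⟨p, rfl⟩ := Nat.exists_eq_add_of_lt hlt
  have h' : a ^ i = a ^ (i + (p + 1)) := h
  -- From index `i` on, the powers of `a` are periodic with period `p + 1`.
  have hper : ∀ k d : ℕ, a ^ (i + d + k * (p + 1)) = a ^ (i + d) := by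
    intro k d
    induction k with
    | zero => simp
    | succ k ih =>
      rw [show i + d + (k + 1) * (p + 1) = i + (p + 1) + (d + k * (p + 1)) by ring, pow_add,
        ← h', ← pow_add, ← ih]
      congr 1
      ring
  -- The exponent `(i + 1) * (p + 1)` is a positive multiple of the period and at least `i`.
  have hN : (i + 1) * (p + 1) = i + (i * p + p + 1) := by ring
  refine ⟨i + (i * p + p), ?_⟩
  rw [← pow_add]
  have := hper (i + 1) (i * p + p + 1)
  rw [hN] at this
  exact this

/-- If `A * A ∼ A`, every context accepting an element `x * a ^ n` of `A * A ^ n` accepts an element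
of `A`: induct on `n`, moving one factor `a` at a time into the right context. -/
theorem SimF.exists_mem_of_mul_pow {M : Type*} [Monoid M] {F A : Set M}
    (hAA : SimF F (A * A) A) {a : M} (ha : a ∈ A) (n : ℕ) :
    ∀ (ℓ r : M) {x : M}, x ∈ A → ℓ * (x * a ^ n) * r ∈ F → ∃ y ∈ A, ℓ * y * r ∈ F := by
  induction n with
  | zero => exact fun ℓ r x hx h => ⟨x, hx, by simpa using h⟩
  | succ n ih =>
    intro ℓ r x hx h
    obtain ⟨y, hy, hF⟩ := ih ℓ (a * r) hx (by simpa [pow_succ, mul_assoc] using h)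
    exact (hAA ℓ r).1 ⟨y * a, Set.mul_mem_mul hy ha, by simpa [mul_assoc] using hF⟩

theorem quotient_zeroOneFree_iff_idempotent_insertion
    {M : Type*} [Monoid M] [Fintype M] (F : Set M) :
    (∀ s t e : M, e * e = e → s * t ∈ F → s * e * t ∈ F) ↔
      ¬ ∃ A B : Set M, A.Nonempty ∧ B.Nonempty ∧ ¬ SimF F A B ∧
          SimF F (A ∪ B) B ∧ SimF F (A * B) A ∧ SimF F (B * A) A ∧
          SimF F (A * A) A ∧ SimF F (B * B) B := by
  constructor
  · rintro h ⟨A, B, ⟨a, ha⟩, -, hne, hU, -, hBA, hAA, -⟩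
    refine hne fun ℓ r => ⟨fun ⟨x, hx, hF⟩ => (hU ℓ r).1 ⟨x, Or.inl hx, hF⟩, ?_⟩
    rintro ⟨b, hb, hF⟩
    obtain ⟨n, hn⟩ := exists_idempotent_pow a
    have hF' := h (ℓ * b) r _ hn hF
    obtain ⟨y, hy, hyF⟩ := (hBA ℓ (a ^ n * r)).1
      ⟨b * a, Set.mul_mem_mul hb ha, by simpa [pow_succ', mul_assoc] using hF'⟩
    exact hAA.exists_mem_of_mul_pow ha n ℓ r hy (by simpa [mul_assoc] using hyF)
  · intro h s t e he hst
    by_contra hF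
    refine h ⟨{e}, {1, e}, by simp, by simp, fun hs => ?_, ?_, ?_, ?_, ?_, ?_⟩
    · have := (hs s t).2 ⟨1, by simp, by simpa using hst⟩
      simp [hF] at this
    all_goals
      intro ℓ r
      simp [Set.mem_mul, he]
end
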